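/- Let j ≥ 1 be odd and d = (3j+1)/2. The number of non-equivalent 1-equiparting matrices of size 2 × 4j equals C(j, (j+1)/2). -/

import Mathlib

/-- The `i`-th `2 × 4` block of a `2 × 4j` binary matrix. -/
def block2 {j : ℕ} (A : Fin 2 → Fin (4 * j) → Bool) (i : Fin j) :
    Fin 2 → Fin 4 → Bool :=
  fun r s => A r ⟨4 * i.val + s.val, by have := i.isLt; have := s.isLt; omega⟩

/-- A 2-bit Gray code: a `2 × 4` binary matrix whose columns list all vectors of
`{0,1}^2`, with consecutive columns differing in exactly one bit. -/
def IsGrayCode2 (M : Fin 2 → Fin 4 → Bool) : Prop :=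
  Function.Bijective (fun s : Fin 4 => fun r : Fin 2 => M r s) ∧
  ∀ s : Fin 3,
    (Finset.univ.filter fun r : Fin 2 => M r s.castSucc ≠ M r s.succ).card = 1

/-- The transition count of row `r` of a `2 × 4j` matrix: the number of pairs of
consecutive columns at which the row entries differ (no wrap-around). -/
def rowTrans2 {j : ℕ} (A : Fin 2 → Fin (4 * j) → Bool) (r : Fin 2) : ℕ :=
  (Finset.univ.filter fun p : Fin (4 * j) × Fin (4 * j) =>
    (p.2 : ℕ) = (p.1 : ℕ) + 1 ∧ A r p.1 ≠ A r p.2).card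

/-- A `1`-equiparting matrix of size `2 × 4j`: a concatenation of `j` 2-bit Gray
codes with the last column of each block equal to the first column of the next
block, such that one row has transition count `d − 1` and the other row has
transition count `d`. -/
def IsEquiparting1 {j : ℕ} (d : ℕ) (A : Fin 2 → Fin (4 * j) → Bool) : Prop :=
  (∀ i : Fin j, IsGrayCode2 (block2 A i)) ∧
  (∀ i : Fin j, ∀ h : i.val + 1 < j, ∀ r : Fin 2,
    block2 A i r 3 = block2 A ⟨i.val + 1, h⟩ r 0) ∧
  ∃ r : Fin 2, rowTrans2 A r = d - 1 ∧ ∀ s : Fin 2, s ≠ r → rowTrans2 A s = d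

/-- Equivalence of `2 × 4j` binary matrices: row permutations and/or
complementing all bits in some rows. -/
def MatEquiv {j : ℕ} (A B : Fin 2 → Fin (4 * j) → Bool) : Prop :=
  ∃ (π : Equiv.Perm (Fin 2)) (ε : Fin 2 → Bool),
    ∀ r s, B r s = xor (ε r) (A (π r) s)

/-- Membership of a natural number index in a set of block indices. -/
def idxMem {j : ℕ} (S : Finset (Fin j)) (i : ℕ) : Bool :=
  if h : i < j then decide ((⟨i, h⟩ : Fin j) ∈ S) else false

/-- Whether row `r` has two transitions inside block `i`. -/
def dbl {j : ℕ} (S : Finset (Fin j)) (r : Fin 2) (i : ℕ) : Bool :=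
  idxMem S i == decide (r = 0)

/-- Row patterns inside a block: `0110` or `0011`. -/
def pat (b : Bool) (s : ℕ) : Bool :=
  if b then (decide (s = 1) || decide (s = 2)) else decide (2 ≤ s)

/-- Value of row `r` in the first column of block `i`. -/
def startVal {j : ℕ} (S : Finset (Fin j)) (r : Fin 2) : ℕ → Bool
  | 0 => false
  | i + 1 => xor (startVal S r i) (!dbl S r i)

/-- The normalised matrix attached to a set of blocks. -/
def mkMat {j : ℕ} (S : Finset (Fin j)) : Fin 2 → Fin (4 * j) → Bool :=
  fun r c => xor (startVal S r (c.val / 4)) (pat (dbl S r (c.val / 4)) (c.val % 4))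

lemma block2_mk {j : ℕ} (S : Finset (Fin j)) (i : Fin j) (r : Fin 2) (s : Fin 4) :
    block2 (mkMat S) i r s = xor (startVal S r i) (pat (dbl S r i) s) := by
  have h1 : (4 * i.val + s.val) / 4 = i.val := by omega
  have h2 : (4 * i.val + s.val) % 4 = s.val := by omega
  simp only [block2, mkMat, h1, h2]

lemma gray_of_pat (M : Fin 2 → Fin 4 → Bool) (t : Bool)
    (h : ∀ r s, M r s = xor (M r 0) (pat (t == decide (r = 0)) s.val)) : IsGrayCode2 M := by
  have h' : M = fun r s => xor (M r 0) (pat (t == decide (r = 0)) s.val) := by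
    funext r s; exact h r s
  generalize ha : (fun r => M r 0) = a at *
  have h'' : M = fun r s => xor (a r) (pat (t == decide (r = 0)) s.val) := by
    rw [← ha]; exact h'
  clear h h' ha
  subst h''
  refine ⟨(Fintype.bijective_iff_injective_and_card _).2 ⟨?_, by simp⟩, ?_⟩
  · intro x y hxy
    have e0 := congrFun hxy 0
    have e1 := congrFun hxy 1
    simp only at e0 e1
    generalize a 0 = a0 at *
    generalize a 1 = a1 at *
    clear hxy
    revert a0 a1 t x y
    decide
  · intro s
    rw [Finset.card_filter, Fin.sum_univ_two]
    beta_reduce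
    generalize a 0 = a0 at *
    generalize a 1 = a1 at *
    clear a
    revert a0 a1 t s
    decide

lemma pat_of_gray (M : Fin 2 → Fin 4 → Bool) (h : IsGrayCode2 M) :
    ∃ t : Bool, ∀ r s, M r s = xor (M r 0) (pat (t == decide (r = 0)) s.val) := by
  obtain ⟨hb, hs⟩ := h
  have hne : ∀ x y : Fin 4, x ≠ y → ¬ (M 0 x = M 0 y ∧ M 1 x = M 1 y) := by
    rintro x y hxy ⟨h0, h1⟩
    apply hxy
    apply hb.1
    funext r
    fin_cases r
    · exact h0
    · exact h1
  have s0 := hs 0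
  have s1 := hs 1
  have s2 := hs 2
  rw [Finset.card_filter, Fin.sum_univ_two] at s0 s1 s2
  have n1 := hne 0 2 (by decide)
  have n2 := hne 1 3 (by decide)
  have n3 := hne 0 3 (by decide)
  refine ⟨xor (M 0 0) (M 0 1), ?_⟩
  clear hs hb hne
  simp only [show (Fin.castSucc (0 : Fin 3)) = (0 : Fin 4) from rfl,
    show (Fin.castSucc (1 : Fin 3)) = (1 : Fin 4) from rfl,
    show (Fin.castSucc (2 : Fin 3)) = (2 : Fin 4) from rfl,
    show (Fin.succ (0 : Fin 3)) = (1 : Fin 4) from rfl,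
    show (Fin.succ (1 : Fin 3)) = (2 : Fin 4) from rfl,
    show (Fin.succ (2 : Fin 3)) = (3 : Fin 4) from rfl] at s0 s1 s2
  suffices hh : (M 0 0 = xor (M 0 0) (pat (xor (M 0 0) (M 0 1) == true) 0) ∧
    M 0 1 = xor (M 0 0) (pat (xor (M 0 0) (M 0 1) == true) 1) ∧
    M 0 2 = xor (M 0 0) (pat (xor (M 0 0) (M 0 1) == true) 2) ∧
    M 0 3 = xor (M 0 0) (pat (xor (M 0 0) (M 0 1) == true) 3)) ∧
    (M 1 0 = xor (M 1 0) (pat (xor (M 0 0) (M 0 1) == false) 0) ∧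
    M 1 1 = xor (M 1 0) (pat (xor (M 0 0) (M 0 1) == false) 1) ∧
    M 1 2 = xor (M 1 0) (pat (xor (M 0 0) (M 0 1) == false) 2) ∧
    M 1 3 = xor (M 1 0) (pat (xor (M 0 0) (M 0 1) == false) 3)) by
    obtain ⟨⟨p0, p1, p2, p3⟩, q0, q1, q2, q3⟩ := hh
    intro r s
    fin_cases r <;> fin_cases s
    · exact p0
    · exact p1
    · exact p2
    · exact p3
    · exact q0
    · exact q1
    · exact q2
    · exact q3
  generalize M 0 0 = a0 at *
  generalize M 0 1 = a1 at *
  generalize M 0 2 = a2 at *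
  generalize M 0 3 = a3 at *
  generalize M 1 0 = b0 at *
  generalize M 1 1 = b1 at *
  generalize M 1 2 = b2 at *
  generalize M 1 3 = b3 at *
  clear M
  cases a0 <;> cases a1 <;> cases a2 <;> cases a3 <;> cases b0 <;> cases b1 <;> cases b2 <;>
    cases b3 <;> simp_all [pat]

/-- The structural part of the definition of equiparting matrices. -/
def Struct {j : ℕ} (A : Fin 2 → Fin (4 * j) → Bool) : Prop :=
  (∀ i : Fin j, IsGrayCode2 (block2 A i)) ∧
  (∀ i : Fin j, ∀ h : i.val + 1 < j, ∀ r : Fin 2,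
    block2 A i r 3 = block2 A ⟨i.val + 1, h⟩ r 0)

lemma dbl_eq {j : ℕ} (S : Finset (Fin j)) (i : Fin j) (r : Fin 2) :
    dbl S r i = (decide (i ∈ S) == decide (r = 0)) := by
  simp [dbl, idxMem]

lemma pat_zero (b : Bool) : pat b 0 = false := by cases b <;> rfl
lemma pat_three (b : Bool) : pat b 3 = !b := by cases b <;> rfl
lemma pat_one (b : Bool) : pat b 1 = b := by cases b <;> rfl

lemma struct_mk {j : ℕ} (S : Finset (Fin j)) : Struct (mkMat S) := by
  refine ⟨fun i => gray_of_pat _ (decide (i ∈ S)) ?_, ?_⟩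
  · intro r s
    rw [block2_mk, block2_mk, dbl_eq]
    simp [pat_zero]
  · intro i h r
    rw [block2_mk, block2_mk]
    simp [pat_zero, startVal, pat_three]

lemma struct_form {j : ℕ} (A : Fin 2 → Fin (4 * j) → Bool) (h : Struct A) :
    ∃ (S : Finset (Fin j)) (ε : Fin 2 → Bool), ∀ r c, A r c = xor (ε r) (mkMat S r c) := by
  classical
  obtain ⟨hg, hl⟩ := h
  choose t ht using fun i => pat_of_gray _ (hg i)
  let S : Finset (Fin j) := Finset.univ.filter fun i => t i = true
  let ε : Fin 2 → Bool := fun r => if h : 0 < j then block2 A ⟨0, h⟩ r 0 else false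
  have hS : ∀ i, decide (i ∈ S) = t i := by intro i; simp [S]
  have key : ∀ n (hn : n < j) r, block2 A ⟨n, hn⟩ r 0 = xor (ε r) (startVal S r n) := by
    intro n
    induction n with
    | zero => intro hn r; simp [ε, hn, startVal]
    | succ n ih =>
      intro hn r
      rw [← hl ⟨n, by omega⟩ hn r, ht, ih]
      have := dbl_eq S ⟨n, by omega⟩ r
      rw [hS] at this
      simp only at this
      rw [startVal, this]
      change xor _ (pat _ 3) = _
      rw [pat_three, Bool.xor_assoc]
  refine ⟨S, ε, fun r c => ?_⟩
  have hc := c.isLt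
  have hi : c.val / 4 < j := by omega
  have e := ht ⟨c.val / 4, hi⟩ r ⟨c.val % 4, by omega⟩
  rw [key, ← hS, ← dbl_eq, Bool.xor_assoc] at e
  have e2 : block2 A ⟨c.val / 4, hi⟩ r ⟨c.val % 4, by omega⟩ = A r c := by
    simp only [block2]
    congr 1
    ext
    simp only
    omega
  rw [← e2, e, mkMat]

lemma rowTrans_blocks {j : ℕ} (A : Fin 2 → Fin (4 * j) → Bool) (h : Struct A) (r : Fin 2) :
    rowTrans2 A r = ∑ i : Fin j, ∑ s : Fin 3,
      if block2 A i r s.castSucc ≠ block2 A i r s.succ then 1 else 0 := by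
  rw [← Finset.sum_product', ← Finset.card_filter, rowTrans2]
  symm
  refine Finset.card_bij (fun p _ => (⟨4 * p.1.val + p.2.val, by omega⟩,
    ⟨4 * p.1.val + (p.2.val + 1), by omega⟩)) ?_ ?_ ?_
  · rintro ⟨i, s⟩ hp
    simp only [Finset.mem_filter] at hp ⊢
    refine ⟨Finset.mem_univ _, by omega, hp.2⟩
  · rintro ⟨i, s⟩ _ ⟨i', s'⟩ _ hpq
    simp only [Prod.mk.injEq, Fin.mk.injEq] at hpq
    ext
    · simp only; omega
    · simp only; omega
  · rintro ⟨⟨x, hx⟩, ⟨y, hy⟩⟩ hp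
    simp only [Finset.mem_filter, Finset.mem_univ, true_and] at hp
    obtain ⟨rfl, hne⟩ := hp
    by_cases hm : x % 4 = 3
    · exfalso
      apply hne
      have := h.2 ⟨x / 4, by omega⟩ (by simp only; omega) r
      simp only [block2] at this
      convert this using 2
      · ext; change x = 4 * (x / 4) + 3; omega
      · ext; change x + 1 = 4 * (x / 4 + 1) + 0; omega
    · refine ⟨(⟨x / 4, by omega⟩, ⟨x % 4, by omega⟩), ?_, ?_⟩
      · simp only [Finset.mem_filter]
        refine ⟨by simp, ?_⟩
        intro hh
        apply hne
        simp only [block2] at hh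
        convert hh using 2
        · ext; change x = 4 * (x / 4) + x % 4; omega
        · ext; change x + 1 = 4 * (x / 4) + (x % 4 + 1); omega
      · simp only [Prod.mk.injEq, Fin.mk.injEq]
        omega

lemma rowTrans_mk {j : ℕ} (S : Finset (Fin j)) (r : Fin 2) :
    rowTrans2 (mkMat S) r = j + if r = 0 then S.card else Sᶜ.card := by
  rw [rowTrans_blocks _ (struct_mk S)]
  have : ∀ i : Fin j, (∑ s : Fin 3, if block2 (mkMat S) i r s.castSucc ≠
      block2 (mkMat S) i r s.succ then 1 else 0) =
      1 + if (if r = 0 then i ∈ S else i ∈ Sᶜ) then 1 else 0 := by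
    intro i
    simp only [block2_mk, dbl_eq, Finset.mem_compl]
    generalize startVal S r i = a
    by_cases hi : i ∈ S <;> simp only [hi] <;> clear hi <;> revert a r <;> decide
  rw [Finset.sum_congr rfl (fun i _ => this i), Finset.sum_add_distrib]
  by_cases hr : r = 0 <;> simp [hr, -Finset.mem_compl, -Finset.card_compl]

lemma rowTrans_xor {j : ℕ} (A B : Fin 2 → Fin (4 * j) → Bool) (ε : Fin 2 → Bool)
    (h : ∀ r c, A r c = xor (ε r) (B r c)) (r : Fin 2) : rowTrans2 A r = rowTrans2 B r := by
  unfold rowTrans2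
  congr 1
  ext p
  simp [h]

lemma mk_compl {j : ℕ} (S : Finset (Fin j)) (r : Fin 2) (c : Fin (4 * j)) :
    mkMat Sᶜ r c = mkMat S (Equiv.swap 0 1 r) c := by
  have hd : ∀ n, n < j → dbl Sᶜ r n = dbl S (Equiv.swap 0 1 r) n := by
    intro n hn
    have h1 := dbl_eq Sᶜ ⟨n, hn⟩ r
    have h2 := dbl_eq S ⟨n, hn⟩ (Equiv.swap 0 1 r)
    simp only at h1 h2
    rw [h1, h2]
    fin_cases r <;> by_cases h : (⟨n, hn⟩ : Fin j) ∈ S <;> simp [h]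
  have hs : ∀ n, n ≤ j → startVal Sᶜ r n = startVal S (Equiv.swap 0 1 r) n := by
    intro n
    induction n with
    | zero => intro _; rfl
    | succ n ih => intro hn; rw [startVal, startVal, ih (by omega), hd n (by omega)]
  have := c.isLt
  rw [mkMat, mkMat, hs _ (by omega), hd _ (by omega)]

lemma mk_inj {j : ℕ} : Function.Injective (mkMat : Finset (Fin j) → _) := by
  have key : ∀ (S : Finset (Fin j)) (i : Fin j), decide (i ∈ S) =
      xor (block2 (mkMat S) i 0 0) (block2 (mkMat S) i 0 1) := by
    intro S i
    rw [block2_mk, block2_mk, dbl_eq]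
    change _ = xor (xor _ (pat _ 0)) (xor _ (pat _ 1))
    rw [pat_zero, pat_one]
    simp
  intro S T h
  ext i
  have h1 := key S i
  rw [h, ← key T i] at h1
  simpa using h1

lemma mk_zero {j : ℕ} (h : 0 < 4 * j) (S : Finset (Fin j)) (r : Fin 2) :
    mkMat S r ⟨0, h⟩ = false := by
  simp [mkMat, startVal, pat_zero]

/-- For odd `j ≥ 1` and `d = (3j+1)/2`, the number of non-equivalent
`1`-equiparting matrices of size `2 × 4j` equals `C(j, (j+1)/2)`: there is a set
of representatives of that cardinality meeting every equivalence class of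
`1`-equiparting matrices exactly once. -/
theorem count_one_equiparting (j : ℕ) (h1 : 1 ≤ j) (hj : Odd j) :
    ∃ R : Finset (Fin 2 → Fin (4 * j) → Bool),
      R.card = Nat.choose j ((j + 1) / 2) ∧
      (∀ A ∈ R, IsEquiparting1 ((3 * j + 1) / 2) A) ∧
      ∀ A : Fin 2 → Fin (4 * j) → Bool, IsEquiparting1 ((3 * j + 1) / 2) A →
        ∃! B, B ∈ R ∧ MatEquiv A B := by
  classical
  obtain ⟨k, hk⟩ := hj
  refine ⟨(Finset.powersetCard ((j + 1) / 2) Finset.univ).image mkMat, ?_, ?_, ?_⟩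
  · rw [Finset.card_image_of_injective _ mk_inj]
    simp
  · intro A hA
    simp only [Finset.mem_image, Finset.mem_powersetCard] at hA
    obtain ⟨S, ⟨-, hS⟩, rfl⟩ := hA
    refine ⟨(struct_mk S).1, (struct_mk S).2, 1, ?_, ?_⟩
    · rw [rowTrans_mk, Finset.card_compl, hS, Fintype.card_fin]
      simp only [one_ne_zero, if_false]
      omega
    · intro s hs
      have : s = 0 := by omega
      subst this
      rw [rowTrans_mk, hS]
      simp only [if_true]
      omega
  · rintro A ⟨hg, hl, r0, hr0, hr1⟩
    obtain ⟨S, ε, hA⟩ := struct_form A ⟨hg, hl⟩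
    have hcc : Sᶜ.card + S.card = j := by
      rw [Finset.card_compl_add_card, Fintype.card_fin]
    have t0 := rowTrans_xor A _ ε hA 0
    have t1 := rowTrans_xor A _ ε hA 1
    rw [rowTrans_mk] at t0 t1
    simp only [if_true, one_ne_zero, if_false] at t0 t1
    have hcase : S.card = (j + 1) / 2 ∨ Sᶜ.card = (j + 1) / 2 := by
      have : r0 = 0 ∨ r0 = 1 := by omega
      rcases this with rfl | rfl
      · have := hr1 1 (by decide)
        right; omega
      · have := hr1 0 (by decide)
        left; omega
    have huniq : ∀ T : Finset (Fin j), MatEquiv A (mkMat T) → T = S ∨ T = Sᶜ := by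
      rintro T ⟨π, δ, h⟩
      have hz : ∀ r, xor (δ r) (ε (π r)) = false := by
        intro r
        have := h r ⟨0, by omega⟩
        rw [hA, mk_zero, mk_zero] at this
        simpa using this.symm
      have hT : ∀ r c, mkMat T r c = mkMat S (π r) c := by
        intro r c
        rw [h, hA, ← Bool.xor_assoc, hz, Bool.false_xor]
      have hp : π = 1 ∨ π = Equiv.swap 0 1 := by
        clear h hz hT
        revert π; decide
      rcases hp with rfl | rfl
      · left
        apply mk_inj
        funext r c
        exact hT r c
      · right
        apply mk_inj
        funext r c
        rw [hT, mk_compl]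
    have hex : ∃ T : Finset (Fin j), T.card = (j + 1) / 2 ∧ MatEquiv A (mkMat T) ∧
        ∀ U, U.card = (j + 1) / 2 → (U = S ∨ U = Sᶜ) → U = T := by
      rcases hcase with hc | hc
      · refine ⟨S, hc, ⟨1, ε, fun r s => by simp [hA]⟩, ?_⟩
        rintro U hU (rfl | rfl)
        · rfl
        · omega
      · refine ⟨Sᶜ, hc, ⟨Equiv.swap 0 1, fun r => ε (Equiv.swap 0 1 r), fun r s => ?_⟩, ?_⟩
        · rw [hA, mk_compl]; simp
        · rintro U hU (rfl | rfl)
          · omega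
          · rfl
    obtain ⟨T, hT, hAT, hU⟩ := hex
    refine ⟨mkMat T, ⟨Finset.mem_image_of_mem _ (by simp [Finset.mem_powersetCard, hT]), hAT⟩, ?_⟩
    rintro B ⟨hB, hAB⟩
    simp only [Finset.mem_image, Finset.mem_powersetCard] at hB
    obtain ⟨U, ⟨-, hUc⟩, rfl⟩ := hB
    rw [hU U hUc (huniq U hAB)]
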